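/- arXiv:2310.06258 — 2 statements merged into one kernel-verified Lean document; each statement's English description precedes it below -/
import Mathlib

section
/- Let M : X → PMF(O) be an ε-differentially private mechanism on a finite product input space with finite output space O, let C be a finite consequence space, u : C → ℝ a nonnegative utility function, f : O → C a post-processor, and x, x' ∈ X neighboring inputs. If both expected utilities E := Σ_{c∈C} u(c)·P(f(M(x)) = c) and E' := Σ_{c∈C} u(c)·P(f(M(x')) = c) are nonzero, then e^{-ε} ≤ E / E' ≤ e^ε. -/
open scoped ENNReal

/-- Two inputs of a product space are neighboring if they differ in exactly one coordinate. -/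
def Neighboring {n : ℕ} {X : Fin n → Type*} (x x' : ∀ j, X j) : Prop :=
  ∃ j : Fin n, x j ≠ x' j ∧ ∀ i : Fin n, i ≠ j → x i = x' i

/-- `M` satisfies `(ε,δ)`-differential privacy. -/
def IsDP {n : ℕ} {X : Fin n → Type*} {O : Type*}
    (M : (∀ j, X j) → PMF O) (ε δ : ℝ) : Prop :=
  ∀ x x' : ∀ j, X j, Neighboring x x' → ∀ S : Set O,
    (M x).toOuterMeasure S ≤
      ENNReal.ofReal (Real.exp ε) * (M x').toOuterMeasure S + ENNReal.ofReal δ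

section

variable {n : ℕ} {X : Fin n → Type*} {O C : Type*} {M : (∀ j, X j) → PMF O} {ε δ : ℝ}
  {x x' : ∀ j, X j}

theorem Neighboring.symm (h : Neighboring x x') : Neighboring x' x :=
  let ⟨j, hne, heq⟩ := h
  ⟨j, hne.symm, fun i hi => (heq i hi).symm⟩

theorem IsDP.map (hM : IsDP M ε δ) (f : O → C) : IsDP (fun x => (M x).map f) ε δ := by
  intro x x' hxx' S
  simpa only [PMF.toOuterMeasure_map_apply] using hM x x' hxx' (f ⁻¹' S)

theorem IsDP.toReal_apply_le (hM : IsDP M ε 0) (hxx' : Neighboring x x') (o : O) :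
    (M x o).toReal ≤ Real.exp ε * (M x' o).toReal := by
  have h : M x o ≤ ENNReal.ofReal (Real.exp ε) * M x' o := by
    simpa only [PMF.toOuterMeasure_apply_singleton, ENNReal.ofReal_zero, add_zero]
      using hM x x' hxx' {o}
  have hfin : ENNReal.ofReal (Real.exp ε) * M x' o ≠ ∞ :=
    ENNReal.mul_ne_top ENNReal.ofReal_ne_top ((M x').apply_ne_top o)
  simpa only [ENNReal.toReal_mul, ENNReal.toReal_ofReal (Real.exp_pos ε).le]
    using ENNReal.toReal_mono hfin h

theorem IsDP.hasSum_utility_le (hM : IsDP M ε 0) (hxx' : Neighboring x x')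
    {u : O → ℝ} (hu : ∀ o, 0 ≤ u o) {E E' : ℝ}
    (hE : HasSum (fun o => u o * (M x o).toReal) E)
    (hE' : HasSum (fun o => u o * (M x' o).toReal) E') :
    E ≤ Real.exp ε * E' := by
  refine hasSum_le (fun o => ?_) hE (hE'.mul_left (Real.exp ε))
  calc u o * (M x o).toReal
      ≤ u o * (Real.exp ε * (M x' o).toReal) :=
        mul_le_mul_of_nonneg_left (hM.toReal_apply_le hxx' o) (hu o)
    _ = Real.exp ε * (u o * (M x' o).toReal) := mul_left_comm _ _ _

end

theorem stmt2_general {n : ℕ} {X : Fin n → Type*} {O C : Type*}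
    {M : (∀ j, X j) → PMF O} {ε : ℝ} (hM : IsDP M ε 0)
    {u : C → ℝ} (hu : ∀ c, 0 ≤ u c) (f : O → C)
    {x x' : ∀ j, X j} (hxx' : Neighboring x x') {E E' : ℝ}
    (hE : HasSum (fun c => u c * ((M x).map f c).toReal) E)
    (hE' : HasSum (fun c => u c * ((M x').map f c).toReal) E')
    (hE'ne : E' ≠ 0) :
    Real.exp (-ε) ≤ E / E' ∧ E / E' ≤ Real.exp ε := by
  have hE'pos : 0 < E' :=
    (hE'.nonneg fun c => mul_nonneg (hu c) ENNReal.toReal_nonneg).lt_of_ne' hE'ne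
  have hle : E ≤ Real.exp ε * E' := (hM.map f).hasSum_utility_le hxx' hu hE hE'
  have hge : E' ≤ Real.exp ε * E := (hM.map f).hasSum_utility_le hxx'.symm hu hE' hE
  constructor
  · rwa [le_div_iff₀ hE'pos, Real.exp_neg, inv_mul_le_iff₀ (Real.exp_pos ε)]
  · rwa [div_le_iff₀ hE'pos]

/-- for an `ε`-DP mechanism, a nonnegative utility function and neighboring
inputs, if both expected utilities are nonzero then their ratio lies in `[e^{-ε}, e^ε]`. -/
theorem stmt2 {n : ℕ} {X : Fin n → Type*} [∀ j, Fintype (X j)] {O : Type*} [Fintype O]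
    (M : (∀ j, X j) → PMF O) (ε : ℝ) (hε : 0 ≤ ε) (hM : IsDP M ε 0)
    (C : Type*) [Fintype C] (u : C → ℝ) (hu : ∀ c, 0 ≤ u c) (f : O → C)
    (x x' : ∀ j, X j) (hxx' : Neighboring x x')
    (E E' : ℝ)
    (hE : E = ∑ c : C, u c * (((M x).map f) c).toReal)
    (hE' : E' = ∑ c : C, u c * (((M x').map f) c).toReal)
    (hEne : E ≠ 0) (hE'ne : E' ≠ 0) :
    Real.exp (-ε) ≤ E / E' ∧ E / E' ≤ Real.exp ε := by
  subst hE hE'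
  exact stmt2_general hM hu f hxx' (hasSum_fintype _) (hasSum_fintype _) hE'ne
end

section
/- (Laplace Mechanism.) Let X be a finite product space with the neighboring relation, let q : X → ℝ be a function with global sensitivity GS(q) = sup over neighboring x, x' of |q(x) − q(x')| satisfying 0 < GS(q) < ∞, and let ε > 0. For each x ∈ X let ν_x be the measure on ℝ with density z ↦ (ε/(2·GS(q)))·exp(−ε·|z − q(x)|/GS(q)) with respect to Lebesgue measure (the law of q(x) + L where L has the Laplace distribution with scale GS(q)/ε). Then for all neighboring x, x' ∈ X and all measurable sets S ⊆ ℝ, ν_x(S) ≤ e^ε · ν_{x'}(S); i.e., the Laplace mechanism satisfies ε-differential privacy. -/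
open scoped ENNReal
open MeasureTheory

/-- The density of the Laplace distribution with location `μ` and scale `b`; for `b = 0` it is `0`,
by division by zero. -/
noncomputable def laplacePDFReal (μ b x : ℝ) : ℝ :=
  (2 * b)⁻¹ * Real.exp (-|x - μ| / b)

/-- The Laplace distribution with location `μ` and scale `b`, the law of the output of the Laplace
mechanism; the zero measure for `b ≤ 0`, where the density is not positive. -/
noncomputable def laplaceMeasure (μ b : ℝ) : Measure ℝ :=
  volume.withDensity fun x => ENNReal.ofReal (laplacePDFReal μ b x)

/-- The global sensitivity of `q` with respect to an arbitrary adjacency relation `r`: the supremum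
of the changes of `q` between adjacent inputs. Where these changes are unbounded it is `0`, not `∞`,
by the convention for `sSup` on `ℝ`. -/
noncomputable def globalSensitivity {α : Type*} (r : α → α → Prop) (q : α → ℝ) : ℝ :=
  sSup {d : ℝ | ∃ x x', r x x' ∧ d = |q x - q x'|}

/-- `ε`-differential privacy, with respect to an arbitrary adjacency relation `r` on the inputs, of
the mechanism whose output on input `x` has law `ν x`. -/
def IsDifferentiallyPrivate {α Ω : Type*} [MeasurableSpace Ω] (r : α → α → Prop)
    (ν : α → Measure Ω) (ε : ℝ) : Prop :=
  ∀ x x', r x x' → ∀ S : Set Ω, MeasurableSet S → ν x S ≤ ENNReal.ofReal (Real.exp ε) * ν x' S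

section Laplace

variable {b : ℝ}

theorem laplacePDFReal_le_exp_mul (hb : 0 ≤ b) (μ₁ μ₂ x : ℝ) :
    laplacePDFReal μ₁ b x ≤ Real.exp (|μ₁ - μ₂| / b) * laplacePDFReal μ₂ b x := by
  have triangle : -|x - μ₁| ≤ |μ₁ - μ₂| + -|x - μ₂| := by
    linarith [abs_sub_le x μ₁ μ₂]
  calc (2 * b)⁻¹ * Real.exp (-|x - μ₁| / b)
      ≤ (2 * b)⁻¹ * Real.exp ((|μ₁ - μ₂| + -|x - μ₂|) / b) := by gcongr
    _ = Real.exp (|μ₁ - μ₂| / b) * ((2 * b)⁻¹ * Real.exp (-|x - μ₂| / b)) := by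
      rw [add_div, Real.exp_add, mul_left_comm]

theorem laplaceMeasure_le_exp_smul (hb : 0 ≤ b) (μ₁ μ₂ : ℝ) :
    laplaceMeasure μ₁ b ≤ ENNReal.ofReal (Real.exp (|μ₁ - μ₂| / b)) • laplaceMeasure μ₂ b := by
  rw [laplaceMeasure, laplaceMeasure, ← withDensity_smul' _ _ ENNReal.ofReal_ne_top]
  refine withDensity_mono (ae_of_all _ fun x => ?_)
  rw [Pi.smul_apply, smul_eq_mul, ← ENNReal.ofReal_mul (Real.exp_nonneg _)]
  exact ENNReal.ofReal_le_ofReal (laplacePDFReal_le_exp_mul hb μ₁ μ₂ x)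

theorem laplaceMeasure_div (μ c ε : ℝ) :
    laplaceMeasure μ (c / ε) = volume.withDensity fun x =>
      ENNReal.ofReal (ε / (2 * c) * Real.exp (-(ε * |x - μ|) / c)) := by
  have normalization : (2 * (c / ε))⁻¹ = ε / (2 * c) := by
    rw [← mul_div_assoc, inv_div]
  have exponent (x : ℝ) : -|x - μ| / (c / ε) = -(ε * |x - μ|) / c := by
    rw [div_div_eq_mul_div, neg_mul, mul_comm]
  simp only [laplaceMeasure, laplacePDFReal, normalization, exponent]

end Laplace

section Sensitivity

variable {α : Type*} {r : α → α → Prop} {q : α → ℝ}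

theorem abs_sub_le_globalSensitivity (hpos : 0 < globalSensitivity r q) {x x' : α} (h : r x x') :
    |q x - q x'| ≤ globalSensitivity r q := by
  have bounded : BddAbove {d : ℝ | ∃ x x', r x x' ∧ d = |q x - q x'|} := by
    by_contra unbounded
    exact hpos.ne' (Real.sSup_of_not_bddAbove unbounded)
  exact le_csSup bounded ⟨x, x', h, rfl⟩

theorem stmt8_general {ε : ℝ} (hε : 0 < ε) (hpos : 0 < globalSensitivity r q) :
    IsDifferentiallyPrivate r (fun x => laplaceMeasure (q x) (globalSensitivity r q / ε)) ε := by
  intro x x' h S _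
  have hscale : 0 < globalSensitivity r q / ε := div_pos hpos hε
  have privacy_loss : |q x - q x'| / (globalSensitivity r q / ε) ≤ ε := by
    rw [div_le_iff₀ hscale, mul_div_cancel₀ _ hε.ne']
    exact abs_sub_le_globalSensitivity hpos h
  calc laplaceMeasure (q x) (globalSensitivity r q / ε) S
      ≤ ENNReal.ofReal (Real.exp (|q x - q x'| / (globalSensitivity r q / ε))) *
          laplaceMeasure (q x') (globalSensitivity r q / ε) S :=
        laplaceMeasure_le_exp_smul hscale.le (q x) (q x') S
    _ ≤ ENNReal.ofReal (Real.exp ε) * laplaceMeasure (q x') (globalSensitivity r q / ε) S := by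
      gcongr

end Sensitivity

/-- Laplace Mechanism: let `q : X → ℝ` have global sensitivity
`GS = sup over neighboring x,x' of |q x - q x'|` with `0 < GS` (finite since `X` is a
finite space), and `ε > 0`. Let `ν x` be the law of `q x + L`, `L ∼ Lap(GS/ε)`, i.e. the
measure with density `z ↦ (ε/(2 GS)) exp(-ε |z - q x| / GS)` w.r.t. Lebesgue measure.
Then for all neighboring `x, x'` and all measurable `S ⊆ ℝ`, `ν x S ≤ e^ε · ν x' S`. -/
theorem stmt8 {n : ℕ} {X : Fin n → Type*} [∀ j, Fintype (X j)]
    (q : (∀ j, X j) → ℝ) (ε : ℝ) (hε : 0 < ε)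
    (GS : ℝ)
    (hGS : GS = sSup {d : ℝ | ∃ x x' : ∀ j, X j, Neighboring x x' ∧ d = |q x - q x'|})
    (hGSpos : 0 < GS)
    (ν : (∀ j, X j) → Measure ℝ)
    (hν : ∀ x, ν x = volume.withDensity
      (fun z => ENNReal.ofReal ((ε / (2 * GS)) * Real.exp (-(ε * |z - q x|) / GS)))) :
    ∀ x x' : ∀ j, X j, Neighboring x x' → ∀ S : Set ℝ, MeasurableSet S →
      ν x S ≤ ENNReal.ofReal (Real.exp ε) * ν x' S := by
  obtain rfl : ν = fun x => laplaceMeasure (q x) (GS / ε) :=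
    funext fun x => (hν x).trans (laplaceMeasure_div (q x) GS ε).symm
  subst hGS
  exact stmt8_general hε hGSpos
end
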